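/- The edge set of every 3-edge-connected cubic graph can be partitioned into a 1-base and a 2-base; equivalently, every 3-edge-connected cubic graph has a peripheral 2-base. -/

import Mathlib

open scoped Classical

/-- A multigraph with an orientation: each edge `e` has a source `src e` and a target `tgt e`.
Loops and parallel edges are allowed. -/
structure Multigraph (V E : Type) where
  src : E → V
  tgt : E → V

namespace Multigraph

variable {V E : Type}

/-- `u` and `v` are joined by some edge satisfying the predicate `P`. -/
def adjVia (G : Multigraph V E) (P : E → Prop) (u v : V) : Prop :=
  ∃ e, P e ∧ ((G.src e = u ∧ G.tgt e = v) ∨ (G.src e = v ∧ G.tgt e = u))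

/-- `v` is reachable from `u` using only edges satisfying `P`. -/
def Reaches (G : Multigraph V E) (P : E → Prop) : V → V → Prop :=
  Relation.ReflTransGen (G.adjVia P)

/-- The graph is connected when only edges satisfying `P` are kept (all edges deleted
whose predicate fails, all vertices kept). -/
def ConnectedVia (G : Multigraph V E) (P : E → Prop) : Prop :=
  Nonempty V ∧ ∀ u v : V, G.Reaches P u v

def Connected (G : Multigraph V E) : Prop :=
  G.ConnectedVia fun _ => True

/-- `G` is `k`-edge-connected: it is connected and has no edge cut of size less than `k`;
equivalently, deleting any set of fewer than `k` edges leaves it connected. -/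
def EdgeConnected (G : Multigraph V E) (k : ℕ) : Prop :=
  ∀ S : Set E, S.ncard < k → G.ConnectedVia fun e => e ∉ S

/-- The degree of a vertex (loops counted twice). -/
noncomputable def degree (G : Multigraph V E) (v : V) : ℕ :=
  {e | G.src e = v}.ncard + {e | G.tgt e = v}.ncard

/-- Every vertex has degree exactly 3. -/
def Cubic (G : Multigraph V E) : Prop :=
  ∀ v : V, G.degree v = 3

/-- `φ : E → Γ` is a flow: at every vertex, the sum over outgoing edges equals the
sum over incoming edges. -/
def IsFlow [Fintype E] {Γ : Type} [AddCommGroup Γ] (G : Multigraph V E) (φ : E → Γ) : Prop :=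
  ∀ v : V, (∑ e : E, if G.src e = v then φ e else 0) = ∑ e : E, if G.tgt e = v then φ e else 0

/-- The vertex `v` is an endpoint of some edge of `C`. -/
def touches (G : Multigraph V E) (C : Set E) (v : V) : Prop :=
  ∃ e ∈ C, G.src e = v ∨ G.tgt e = v

/-- An edge set `C` is (the edge set of) a cycle: it is nonempty, every vertex it touches
has degree exactly 2 in it, and it is connected. -/
def IsCycle (G : Multigraph V E) (C : Set E) : Prop :=
  C.Nonempty ∧
  (∀ v : V, G.touches C v →
    ({e ∈ C | G.src e = v}.ncard + {e ∈ C | G.tgt e = v}.ncard = 2)) ∧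
  (∀ u v : V, G.touches C u → G.touches C v → G.Reaches (· ∈ C) u v)

/-- `R` is `k`-closed: every cycle with at least one edge outside `R` has at least
`k+1` edges outside `R`. -/
def Closed (G : Multigraph V E) (k : ℕ) (R : Set E) : Prop :=
  ∀ C : Set E, G.IsCycle C → (C \ R).Nonempty → k + 1 ≤ (C \ R).ncard

/-- The `k`-closure `⟨S⟩ₖ` of `S` : the minimal `k`-closed set containing `S`
(the family of `k`-closed sets is closed under intersections). -/
def kClosure (G : Multigraph V E) (k : ℕ) (S : Set E) : Set E :=
  ⋂₀ {R : Set E | S ⊆ R ∧ G.Closed k R}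

/-- `S` is a `k`-base: its `k`-closure is the whole edge set. -/
def IsBase (G : Multigraph V E) (k : ℕ) (S : Set E) : Prop :=
  G.kClosure k S = Set.univ

/-- An edge set `S` is peripheral if `G − S` is connected. -/
def Peripheral (G : Multigraph V E) (S : Set E) : Prop :=
  G.ConnectedVia fun e => e ∉ S

/-- The spanning subgraph `(V, F)` is a forest, i.e. contains no cycle. -/
def IsForest (G : Multigraph V E) (F : Set E) : Prop :=
  ∀ C : Set E, G.IsCycle C → ¬ C ⊆ F

/-- `vs`, `es` describe a path: distinct vertices `vs 0, …, vs n` and distinct edges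
`es 0, …, es (n-1)` where `es i` joins `vs i` and `vs (i+1)`. -/
def IsPath (G : Multigraph V E) {n : ℕ} (vs : Fin (n + 1) → V) (es : Fin n → E) : Prop :=
  Function.Injective vs ∧ Function.Injective es ∧
  ∀ i : Fin n,
    (G.src (es i) = vs i.castSucc ∧ G.tgt (es i) = vs i.succ) ∨
    (G.src (es i) = vs i.succ ∧ G.tgt (es i) = vs i.castSucc)

/-- The edge `e` has `y` as one endpoint and its other endpoint in `X`,
i.e. `e ∈ E(y, X)`. -/
def joins (G : Multigraph V E) (e : E) (y : V) (X : Set V) : Prop :=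
  (G.src e = y ∧ G.tgt e ∈ X) ∨ (G.tgt e = y ∧ G.src e ∈ X)

/-- `W` is the vertex set of a connected component of `G − X`. -/
def IsComponent (G : Multigraph V E) (X W : Set V) : Prop :=
  W.Nonempty ∧ Disjoint W X ∧
  (∀ u ∈ W, ∀ v : V, v ∉ X → G.adjVia (fun _ => True) u v → v ∈ W) ∧
  (∀ u ∈ W, ∀ v ∈ W, G.Reaches (fun e => G.src e ∉ X ∧ G.tgt e ∉ X) u v)

/-- The subgraph induced on `W`, with only those of its edges satisfying `P` kept,
is connected. -/
def ConnectedOn (G : Multigraph V E) (W : Set V) (P : E → Prop) : Prop :=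
  ∀ u ∈ W, ∀ v ∈ W, G.Reaches (fun e => P e ∧ G.src e ∈ W ∧ G.tgt e ∈ W) u v

/-- The subgraph induced on `W` is `k`-edge-connected. -/
def EdgeConnectedOn (G : Multigraph V E) (W : Set V) (k : ℕ) : Prop :=
  ∀ S : Set E, S.ncard < k → G.ConnectedOn W fun e => e ∉ S

/-- Some cycle lies entirely inside the vertex set `X`. -/
def HasCycleIn (G : Multigraph V E) (X : Set V) : Prop :=
  ∃ C : Set E, G.IsCycle C ∧ ∀ e ∈ C, G.src e ∈ X ∧ G.tgt e ∈ X

/-- The edge cut `E(X, V \ X)`. -/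
def cutEdges (G : Multigraph V E) (X : Set V) : Set E :=
  {e | (G.src e ∈ X ∧ G.tgt e ∉ X) ∨ (G.src e ∉ X ∧ G.tgt e ∈ X)}

/-- A cubic graph is cyclically `k`-edge-connected if every edge cut separating two
cycle-containing parts has at least `k` edges. -/
def CyclicallyEdgeConnected (G : Multigraph V E) (k : ℕ) : Prop :=
  ∀ X : Set V, G.HasCycleIn X → G.HasCycleIn Xᶜ → k ≤ (G.cutEdges X).ncard

/-- `G` is 3-connected: more than 3 vertices, connected, and still connected after
deleting any two vertices. -/
def ThreeConnected [Fintype V] (G : Multigraph V E) : Prop :=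
  3 < Fintype.card V ∧ G.Connected ∧
    ∀ u v : V, G.ConnectedOn {w : V | w ≠ u ∧ w ≠ v} fun _ => True

/-- The graph `G − r` obtained by deleting the vertex `r` and all incident edges. -/
def deleteVertex (G : Multigraph V E) (r : V) :
    Multigraph {v : V // v ≠ r} {e : E // G.src e ≠ r ∧ G.tgt e ≠ r} where
  src e := ⟨G.src e.1, e.2.1⟩
  tgt e := ⟨G.tgt e.1, e.2.2⟩

end Multigraph

namespace Multigraph

variable {V E : Type} {G : Multigraph V E}

section Basic

/-- `u` and `v` are the two endpoints of `e`. -/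
def Link (G : Multigraph V E) (e : E) (u v : V) : Prop :=
  (G.src e = u ∧ G.tgt e = v) ∨ (G.src e = v ∧ G.tgt e = u)

/-- The edges with both endpoints in `A`. -/
def inside (G : Multigraph V E) (A : Set V) : Set E :=
  {e | G.src e ∈ A ∧ G.tgt e ∈ A}

/-- The edges with one endpoint in `A` and the other in `B`. -/
def between (G : Multigraph V E) (A B : Set V) : Set E :=
  {e | ∃ a ∈ A, ∃ b ∈ B, G.Link e a b}

/-- The subgraph induced on `A` is connected (or empty). -/
def InducedConnected (G : Multigraph V E) (A : Set V) : Prop :=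
  ∀ u ∈ A, ∀ v ∈ A, G.Reaches (· ∈ G.inside A) u v

/-- The vertices reachable from `m` inside the subgraph induced on `A`. -/
def componentIn (G : Multigraph V E) (A : Set V) (m : V) : Set V :=
  {u | G.Reaches (· ∈ G.inside A) m u}

theorem Link.symm {e : E} {u v : V} (h : G.Link e u v) : G.Link e v u := Or.symm h

theorem link_src_tgt (e : E) : G.Link e (G.src e) (G.tgt e) := Or.inl ⟨rfl, rfl⟩

theorem Link.eq_or_eq {e : E} {u v a b : V} (h : G.Link e u v) (h' : G.Link e a b) :
    (u = a ∧ v = b) ∨ (u = b ∧ v = a) := by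
  unfold Link at *; grind

theorem Link.mem_inside {e : E} {u v : V} {A : Set V} (h : G.Link e u v) (hu : u ∈ A)
    (hv : v ∈ A) : e ∈ G.inside A := by
  rcases h with ⟨rfl, rfl⟩ | ⟨rfl, rfl⟩
  exacts [⟨hu, hv⟩, ⟨hv, hu⟩]

theorem Link.mem_of_inside {e : E} {u v : V} {A : Set V} (h : G.Link e u v)
    (he : e ∈ G.inside A) : u ∈ A ∧ v ∈ A := by
  rcases h with ⟨rfl, rfl⟩ | ⟨rfl, rfl⟩
  exacts [he, he.symm]

theorem Link.incident {e : E} {u v : V} (h : G.Link e u v) : G.src e = u ∨ G.tgt e = u := by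
  unfold Link at h; tauto

theorem inside_mono {A B : Set V} (h : A ⊆ B) : G.inside A ⊆ G.inside B :=
  fun _ he => ⟨h he.1, h he.2⟩

theorem between_mono_left {A A' B : Set V} (h : A ⊆ A') : G.between A B ⊆ G.between A' B :=
  fun _ ⟨a, ha, b, hb, hl⟩ => ⟨a, h ha, b, hb, hl⟩

theorem cutEdges_eq_between (Y : Set V) : G.cutEdges Y = G.between Y Yᶜ := by
  ext e
  constructor
  · rintro (⟨h1, h2⟩ | ⟨h1, h2⟩)
    · exact ⟨_, h1, _, h2, link_src_tgt e⟩
    · exact ⟨_, h2, _, h1, (link_src_tgt e).symm⟩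
  · rintro ⟨a, ha, b, hb, ⟨rfl, rfl⟩ | ⟨rfl, rfl⟩⟩
    exacts [Or.inl ⟨ha, hb⟩, Or.inr ⟨hb, ha⟩]

theorem Link.reaches {e : E} {u v : V} {P : E → Prop} (h : G.Link e u v) (he : P e) :
    G.Reaches P u v := Relation.ReflTransGen.single ⟨e, he, h⟩

theorem Reaches.mono {P Q : E → Prop} {u v : V} (h : G.Reaches P u v) (hPQ : ∀ e, P e → Q e) :
    G.Reaches Q u v := by
  induction h with
  | refl => exact .refl
  | tail _ hs ih =>
    obtain ⟨e, he, hl⟩ := hs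
    exact ih.tail ⟨e, hPQ e he, hl⟩

theorem Reaches.symm {P : E → Prop} {u v : V} (h : G.Reaches P u v) : G.Reaches P v u := by
  induction h with
  | refl => exact .refl
  | tail _ hs ih =>
    obtain ⟨e, he, hl⟩ := hs
    exact Relation.ReflTransGen.head ⟨e, he, Or.symm hl⟩ ih

theorem Reaches.trans {P : E → Prop} {u v w : V} (h : G.Reaches P u v) (h' : G.Reaches P v w) :
    G.Reaches P u w := Relation.ReflTransGen.trans h h'

theorem componentIn_subset {A : Set V} {m : V} (hm : m ∈ A) : G.componentIn A m ⊆ A := by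
  intro u hu
  induction hu with
  | refl => exact hm
  | tail _ hs _ =>
    obtain ⟨e, he, hl⟩ := hs
    exact (Link.mem_of_inside hl he).2

theorem mem_componentIn_self (A : Set V) (m : V) : m ∈ G.componentIn A m :=
  Relation.ReflTransGen.refl

theorem componentIn_step {A : Set V} {m u v : V} {e : E} (hu : u ∈ G.componentIn A m)
    (huA : u ∈ A) (hv : v ∈ A) (hl : G.Link e u v) : v ∈ G.componentIn A m :=
  Reaches.trans hu (hl.reaches (hl.mem_inside huA hv))

theorem componentIn_mono {A B : Set V} (h : A ⊆ B) (m : V) :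
    G.componentIn A m ⊆ G.componentIn B m :=
  fun _ hu => Reaches.mono hu fun _ he => inside_mono h he

theorem InducedConnected.of_center {A : Set V} {m : V}
    (h : ∀ u ∈ A, G.Reaches (· ∈ G.inside A) m u) : G.InducedConnected A :=
  fun u hu v hv => (h u hu).symm.trans (h v hv)

theorem inducedConnected_componentIn (A : Set V) (m : V) :
    G.InducedConnected (G.componentIn A m) := by
  refine .of_center (m := m) fun u hu => ?_
  induction hu with
  | refl => exact .refl
  | tail hr hs ih =>
    obtain ⟨e, he, hl⟩ := hs
    refine ih.trans (Link.reaches (e := e) hl (Link.mem_inside hl hr ?_))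
    exact Reaches.trans hr (Link.reaches hl he)

theorem inducedConnected_singleton (v : V) : G.InducedConnected {v} := by
  rintro u rfl w rfl
  exact .refl

/-- A connected induced subgraph meeting `A` but not contained in it has an edge leaving `A`. -/
theorem InducedConnected.exists_link {W A : Set V} (hW : G.InducedConnected W) {a b : V}
    (ha : a ∈ W) (haA : a ∈ A) (hb : b ∈ W) (hbA : b ∉ A) :
    ∃ u ∈ W ∩ A, ∃ v ∈ W \ A, ∃ e, G.Link e u v := by
  by_contra! hno
  have key : ∀ v, G.Reaches (· ∈ G.inside W) a v → v ∈ A := by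
    intro v hv
    induction hv with
    | refl => exact haA
    | tail _ hs ih =>
      obtain ⟨e, he, hl⟩ := hs
      have hm := Link.mem_of_inside hl he
      by_contra hc
      exact hno _ ⟨hm.1, ih⟩ _ ⟨hm.2, hc⟩ e hl
  exact hbA (key b (hW a ha b hb))

theorem EdgeConnected.three_le_cutEdges (hG : G.EdgeConnected 3) {Y : Set V}
    (hY : Y.Nonempty) (hY' : Yᶜ.Nonempty) : 3 ≤ (G.cutEdges Y).ncard := by
  by_contra! hlt
  obtain ⟨a, ha⟩ := hY
  obtain ⟨b, hb⟩ := hY'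
  have key : ∀ v, G.Reaches (fun e => e ∉ G.cutEdges Y) a v → v ∈ Y := by
    intro v hv
    induction hv with
    | refl => exact ha
    | tail _ hs ih =>
      obtain ⟨e, he, hl⟩ := hs
      by_contra hc
      exact he (cutEdges_eq_between Y ▸ ⟨_, ih, _, hc, hl⟩)
  exact hb (key b ((hG _ hlt).2 a b))

/-- A vertex of a cubic graph is incident with at most three edges. -/
theorem Cubic.card_le_three_of_incident [Fintype E] (hc : G.Cubic) {v : V} {s : Finset E}
    (hs : ∀ e ∈ s, G.src e = v ∨ G.tgt e = v) : s.card ≤ 3 := by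
  have h1 : (s : Set E) ⊆ {e | G.src e = v} ∪ {e | G.tgt e = v} := fun e he => hs e he
  have h2 := Set.ncard_le_ncard h1 (Set.toFinite _)
  have h3 := Set.ncard_union_le {e | G.src e = v} {e | G.tgt e = v}
  have h4 := hc v
  unfold degree at h4
  rw [Set.ncard_coe_finset] at h2
  omega

end Basic

section Cycles

/-- The degree of `x` in the spanning subgraph with edge set `S`. -/
noncomputable def degIn (G : Multigraph V E) (S : Set E) (x : V) : ℕ :=
  {e ∈ S | G.src e = x}.ncard + {e ∈ S | G.tgt e = x}.ncard

theorem ncard_sep_insert [Finite E] {S : Set E} {e : E} (he : e ∉ S) (p : E → Prop) :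
    {f ∈ insert e S | p f}.ncard = {f ∈ S | p f}.ncard + if p e then 1 else 0 := by
  split_ifs with h
  · have : {f ∈ insert e S | p f} = insert e {f ∈ S | p f} := by
      ext f; simp only [Set.mem_ofPred_eq, Set.mem_insert_iff]; grind
    rw [this, Set.ncard_insert_of_notMem (fun h' => he h'.1) (Set.toFinite _)]
  · have : {f ∈ insert e S | p f} = {f ∈ S | p f} := by
      ext f; simp only [Set.mem_ofPred_eq, Set.mem_insert_iff]; grind
    rw [this, add_zero]

theorem degIn_insert [Finite E] {S : Set E} {e : E} (he : e ∉ S) {u v : V} (hl : G.Link e u v)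
    (x : V) :
    G.degIn (insert e S) x = G.degIn S x + (if u = x then 1 else 0) + if v = x then 1 else 0 := by
  unfold degIn
  rw [ncard_sep_insert he, ncard_sep_insert he]
  rcases hl with ⟨rfl, rfl⟩ | ⟨rfl, rfl⟩ <;> omega

/-- `S` is the edge set and `T` the vertex set of a path from `u` to `v` all of whose edges
satisfy `P`. -/
inductive PathSet (G : Multigraph V E) (P : E → Prop) (v : V) : V → Set V → Set E → Prop
  | nil : PathSet G P v v {v} ∅
  | cons {u w : V} {e : E} {T : Set V} {S : Set E} (hl : G.Link e u w) (he : P e)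
      (h : PathSet G P v w T S) (hu : u ∉ T) : PathSet G P v u (insert u T) (insert e S)

namespace PathSet

variable {P : E → Prop} {u v : V} {T : Set V} {S : Set E}

theorem exists_suffix (h : G.PathSet P v u T S) {x : V} (hx : x ∈ T) :
    ∃ T' S', G.PathSet P v x T' S' := by
  induction h with
  | nil =>
    obtain rfl := hx
    exact ⟨_, _, .nil⟩
  | cons hl he h hu ih =>
    rcases hx with rfl | hx
    · exact ⟨_, _, .cons hl he h hu⟩
    · exact ih hx

theorem exists_of_reaches (h : G.Reaches P u v) : ∃ T S, G.PathSet P v u T S := by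
  induction h using Relation.ReflTransGen.head_induction_on with
  | refl => exact ⟨_, _, .nil⟩
  | head hs _ ih =>
    rename_i a c _
    obtain ⟨e, he, hl⟩ := hs
    obtain ⟨T, S, hp⟩ := ih
    by_cases ha : a ∈ T
    · exact hp.exists_suffix ha
    · exact ⟨_, _, .cons hl he hp ha⟩

theorem start_mem (h : G.PathSet P v u T S) : u ∈ T := by
  cases h with
  | nil => exact rfl
  | cons => exact Set.mem_insert _ _

theorem forall_edge (h : G.PathSet P v u T S) : ∀ e ∈ S, P e := by
  induction h with
  | nil => simp
  | cons hl he h hu ih =>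
    rintro f (rfl | hf)
    exacts [he, ih f hf]

theorem subset_inside (h : G.PathSet P v u T S) : S ⊆ G.inside T := by
  induction h with
  | nil => simp
  | cons hl he h hu ih =>
    rintro f (rfl | hf)
    · exact hl.mem_inside (Set.mem_insert _ _) (Set.mem_insert_of_mem _ h.start_mem)
    · exact inside_mono (Set.subset_insert _ _) (ih hf)

theorem reaches (h : G.PathSet P v u T S) : ∀ x ∈ T, G.Reaches (· ∈ S) u x := by
  induction h with
  | nil => rintro x rfl; exact .refl
  | cons hl he h hu ih =>
    rintro x (rfl | hx)
    · exact .refl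
    · exact (hl.reaches (Set.mem_insert _ _)).trans
        ((ih x hx).mono fun f hf => Set.mem_insert_of_mem _ hf)

theorem degIn_add [Finite E] (h : G.PathSet P v u T S) (x : V) :
    G.degIn S x + (if u = x then 1 else 0) + (if v = x then 1 else 0) =
      if x ∈ T then 2 else 0 := by
  induction h with
  | nil => simp [degIn]; grind
  | cons hl he h hu ih =>
    rename_i u w e T S
    have heS : e ∉ S := fun h' => hu (hl.mem_of_inside (h.subset_inside h')).1
    rw [degIn_insert heS hl]
    grind

end PathSet

/-- An edge whose endpoints are joined by other edges satisfying `P` closes a cycle. -/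
theorem exists_isCycle [Finite E] {P : E → Prop} {e : E} (he : ¬ P e)
    (h : G.Reaches P (G.src e) (G.tgt e)) :
    ∃ C, G.IsCycle C ∧ e ∈ C ∧ ∀ f ∈ C, f = e ∨ P f := by
  obtain ⟨T, S, hp⟩ := PathSet.exists_of_reaches h
  have heS : e ∉ S := fun h' => he (hp.forall_edge e h')
  have htgt : G.tgt e ∈ T := by
    by_contra hc
    have := hp.degIn_add (G.tgt e)
    simp [hc] at this
  have hT : ∀ x, G.touches (insert e S) x → x ∈ T := by
    rintro x ⟨f, rfl | hf, hx⟩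
    · rcases hx with rfl | rfl
      exacts [hp.start_mem, htgt]
    · have := hp.subset_inside hf
      rcases hx with rfl | rfl
      exacts [this.1, this.2]
  refine ⟨insert e S, ⟨⟨e, Set.mem_insert _ _⟩, fun x hx => ?_, fun x y hx hy => ?_⟩,
    Set.mem_insert _ _, ?_⟩
  · have h1 := hp.degIn_add x
    rw [if_pos (hT x hx)] at h1
    exact (degIn_insert heS (link_src_tgt e) x).trans h1
  · exact ((hp.reaches x (hT x hx)).symm.trans (hp.reaches y (hT y hy))).mono
      fun f hf => Set.mem_insert_of_mem _ hf
  · rintro f (rfl | hf)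
    exacts [Or.inl rfl, Or.inr (hp.forall_edge f hf)]

/-- An edge whose endpoints are joined by a `k`-closed set and fewer than `k` further edges
belongs to that set. -/
theorem Closed.mem_of_reaches [Finite E] {k : ℕ} {R F : Set E} (hR : G.Closed k R)
    (hF : F.ncard < k) {e : E} (h : G.Reaches (· ∈ R ∪ F) (G.src e) (G.tgt e)) (heF : e ∉ F) :
    e ∈ R := by
  by_contra heR
  obtain ⟨C, hC, heC, hsub⟩ := exists_isCycle (by simp [heR, heF]) h
  have h1 := hR C hC ⟨e, heC, heR⟩
  have h2 : C \ R ⊆ insert e F := by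
    rintro f ⟨hf, hfR⟩
    rcases hsub f hf with rfl | hf' | hf'
    exacts [Set.mem_insert _ _, absurd hf' hfR, Set.mem_insert_of_mem _ hf']
  have h3 := Set.ncard_le_ncard h2 (Set.toFinite _)
  have h4 := Set.ncard_insert_le e F
  omega

/-- A closed set that connects the graph contains every edge. -/
theorem Closed.eq_univ [Finite E] {k : ℕ} (hk : 0 < k) {R : Set E} (hR : G.Closed k R)
    (h : ∀ u v, G.Reaches (· ∈ R) u v) : R = Set.univ :=
  Set.eq_univ_of_forall fun _ => hR.mem_of_reaches (F := ∅) (by simpa using hk)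
    ((h _ _).mono fun _ hf => Or.inl hf) (by simp)

theorem isBase_iff {k : ℕ} {S : Set E} :
    G.IsBase k S ↔ ∀ R, S ⊆ R → G.Closed k R → R = Set.univ := by
  unfold IsBase kClosure
  rw [Set.sInter_eq_univ]
  exact ⟨fun h R h1 h2 => h R ⟨h1, h2⟩, fun h R hR => h R hR.1 hR.2⟩

/-- Two parts connected through a 2-closed set `R` and joined by at least two edges are connected
to each other through `R`. -/
theorem Closed.reaches_union [Finite E] {R : Set E} (hR : G.Closed 2 R) {X D : Set V}
    (hX : ∀ u ∈ X, ∀ v ∈ X, G.Reaches (· ∈ R) u v)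
    (hD : ∀ u ∈ D, ∀ v ∈ D, G.Reaches (· ∈ R) u v)
    (h2 : 2 ≤ (G.between D X).ncard) :
    ∀ u ∈ X ∪ D, ∀ v ∈ X ∪ D, G.Reaches (· ∈ R) u v := by
  obtain ⟨e, f, he, hf, hef⟩ := (Set.one_lt_ncard_iff (Set.toFinite _)).1 h2
  obtain ⟨d, hd, x, hx, hl⟩ := he
  obtain ⟨d', hd', x', hx', hl'⟩ := hf
  have hxd : G.Reaches (· ∈ R ∪ {f}) d x :=
    ((hD d hd d' hd').mono fun _ h => Or.inl h).trans
      ((hl'.reaches (Or.inr rfl)).trans ((hX x' hx' x hx).mono fun _ h => Or.inl h))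
  have heR : e ∈ R := by
    refine hR.mem_of_reaches (F := {f}) (by simp) ?_ (by simpa using hef)
    rcases hl with ⟨h1, h2⟩ | ⟨h1, h2⟩
    · rwa [h1, h2]
    · rw [h1, h2]; exact hxd.symm
  have hdx : G.Reaches (· ∈ R) d x := hl.reaches heR
  rintro u (hu | hu) v (hv | hv)
  · exact hX u hu v hv
  · exact (hX u hu x hx).trans (hdx.symm.trans (hD d hd v hv))
  · exact (hD u hu d hd).trans (hdx.trans (hX x hx v hv))
  · exact hD u hu v hv

end Cycles

section Ears

variable {W D : Set V}

/-- Every connected induced subgraph on at least two vertices has a non-separating vertex. -/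
theorem InducedConnected.exists_nonseparating [Finite V] (hW : G.InducedConnected W)
    (hne : W.Nonempty) : ∃ w ∈ W, G.InducedConnected (W \ {w}) := by
  by_cases hs : ∃ w, W = {w}
  · obtain ⟨w, rfl⟩ := hs
    exact ⟨w, rfl, by simp [InducedConnected]⟩
  obtain ⟨w₀, hw₀⟩ := hne
  obtain ⟨Y, hY⟩ := Set.Finite.exists_maximal
    (s := {Y : Set V | Y.Nonempty ∧ Y ⊂ W ∧ G.InducedConnected Y}) (Set.toFinite _)
    ⟨{w₀}, ⟨w₀, rfl⟩, ⟨by simpa using hw₀, fun h => hs ⟨w₀, h.antisymm (by simpa using hw₀)⟩⟩,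
      inducedConnected_singleton w₀⟩
  obtain ⟨⟨⟨y, hy⟩, hYW, hYc⟩, hmax⟩ := hY
  obtain ⟨z, hz, hzY⟩ := Set.exists_of_ssubset hYW
  obtain ⟨u, hu, v, hv, e, hl⟩ := hW.exists_link (hYW.1 hy) hy hz hzY
  have hins : G.InducedConnected (insert v Y) := by
    have hmono : ∀ f, f ∈ G.inside Y → f ∈ G.inside (insert v Y) :=
      fun f hf => inside_mono (Set.subset_insert _ _) hf
    refine .of_center (m := u) fun x hx => ?_
    rcases hx with rfl | hx
    · exact hl.reaches (hl.mem_inside (Set.mem_insert_of_mem _ hu.2) (Set.mem_insert _ _))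
    · exact (hYc u hu.2 x hx).mono hmono
  have hWeq : insert v Y = W := by
    by_contra hne
    have hsub : insert v Y ⊆ W := Set.insert_subset hv.1 hYW.1
    exact hv.2 (hmax ⟨⟨v, Set.mem_insert _ _⟩, hsub.ssubset_of_ne hne, hins⟩
      (Set.subset_insert _ _) (Set.mem_insert _ _))
  refine ⟨v, hv.1, ?_⟩
  have : W \ {v} = Y := by
    rw [← hWeq]
    simpa using hv.2
  rwa [this]

/-- `D` is a candidate for the next ear: it and its complement in `W` are connected,
and it has at least two edges to the complement of `W`. -/
def EarCandidate (G : Multigraph V E) (W D : Set V) : Prop :=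
  D ⊆ W ∧ (W \ D).Nonempty ∧ G.InducedConnected D ∧ G.InducedConnected (W \ D) ∧
    2 ≤ (G.between D Wᶜ).ncard

theorem exists_earCandidate [Finite V] [Finite E] (hG : G.EdgeConnected 3)
    (hW : G.InducedConnected W) (hWc : Wᶜ.Nonempty) (hnt : W.Nontrivial) :
    ∃ D, G.EarCandidate W D := by
  obtain ⟨w, hw, hconn⟩ := hW.exists_nonseparating hnt.nonempty
  obtain ⟨w', hw', hne⟩ := hnt.exists_ne w
  have hsing : W \ (W \ {w}) = {w} := by
    rw [Set.sdiff_sdiff_cancel_left]; simpa using hw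
  by_cases h2 : 2 ≤ (G.between {w} Wᶜ).ncard
  · exact ⟨{w}, by simpa using hw, ⟨w', hw', hne⟩, inducedConnected_singleton w, hconn, h2⟩
  · refine ⟨W \ {w}, Set.sdiff_subset, ?_, hconn, ?_, ?_⟩
    · rw [hsing]; exact Set.singleton_nonempty w
    · rw [hsing]; exact inducedConnected_singleton w
    · have h3 := hG.three_le_cutEdges hnt.nonempty hWc
      rw [cutEdges_eq_between] at h3
      have hsub : G.between W Wᶜ ⊆ G.between {w} Wᶜ ∪ G.between (W \ {w}) Wᶜ := by
        rintro e ⟨a, ha, b, hb, hl⟩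
        by_cases haw : a = w
        · exact Or.inl ⟨a, haw, b, hb, hl⟩
        · exact Or.inr ⟨a, ⟨ha, haw⟩, b, hb, hl⟩
      have h4 := Set.ncard_le_ncard hsub (Set.toFinite _)
      have h5 := Set.ncard_union_le (G.between {w} Wᶜ) (G.between (W \ {w}) Wᶜ)
      omega

/-- The vertices of `D` with a neighbour in `W \ D`. -/
def frontier (G : Multigraph V E) (W D : Set V) : Set V :=
  {v ∈ D | ∃ k ∈ W \ D, ∃ e, G.Link e v k}

/-- Moving a frontier vertex out of a minimal candidate leaves only components with
at most one edge to the complement of `W`. -/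
theorem ncard_between_componentIn_le_one (hD : Minimal (G.EarCandidate W) D) {v m : V}
    (hv : v ∈ G.frontier W D) (hm : m ∈ D) (hmv : m ≠ v) :
    (G.between (G.componentIn (D \ {v}) m) Wᶜ).ncard ≤ 1 := by
  by_contra! h2
  obtain ⟨hvD, k, hk, e, hl⟩ := hv
  obtain ⟨hDW, -, hDc, hKc, -⟩ := hD.prop
  set C := G.componentIn (D \ {v}) m with hC
  have hCsub : C ⊆ D \ {v} := componentIn_subset ⟨hm, hmv⟩
  have hvC : v ∉ C := fun h => (hCsub h).2 rfl
  have hcand : G.EarCandidate W C := by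
    refine ⟨fun x hx => hDW (hCsub hx).1, ⟨v, hDW hvD, hvC⟩, inducedConnected_componentIn _ _,
      .of_center (m := v) ?_, h2⟩
    have hDreach : ∀ u, G.Reaches (· ∈ G.inside D) v u →
        u ∈ C ∨ u ∉ C ∧ G.Reaches (· ∈ G.inside (W \ C)) v u := by
      intro u hu
      induction hu with
      | refl => exact Or.inr ⟨hvC, .refl⟩
      | tail _ hs ih =>
        rename_i a b _
        obtain ⟨f, hf, hlf⟩ := hs
        have hab := Link.mem_of_inside hlf hf
        by_cases hb : b ∈ C
        · exact Or.inl hb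
        refine Or.inr ⟨hb, ?_⟩
        rcases ih with ha | ⟨ha, hr⟩
        · by_cases hbv : b = v
          · exact hbv ▸ .refl
          · exact absurd (componentIn_step ha (hCsub ha) ⟨hab.2, hbv⟩ hlf) hb
        · exact hr.trans (Link.reaches (e := f) hlf
            (Link.mem_inside hlf ⟨hDW hab.1, ha⟩ ⟨hDW hab.2, hb⟩))
    have hKsub : W \ D ⊆ W \ C := fun x hx => ⟨hx.1, fun h => hx.2 (hCsub h).1⟩
    rintro u ⟨huW, huC⟩
    by_cases huD : u ∈ D
    · exact ((hDreach u (hDc v hvD u huD)).resolve_left huC).2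
    · exact (hl.reaches (hl.mem_inside (A := W \ C) ⟨hDW hvD, hvC⟩ (hKsub hk))).trans
        ((hKc k hk u ⟨huW, huD⟩).mono fun f hf => inside_mono hKsub hf)
  exact hvC (hD.le_of_le hcand (fun x hx => (hCsub hx).1) hvD)

/-- In a minimal candidate every vertex has a neighbour in `W \ D`. -/
theorem subset_frontier_of_minimal [Fintype E] (hG : G.EdgeConnected 3) (hc : G.Cubic)
    (hW : G.InducedConnected W) (hD : Minimal (G.EarCandidate W) D) :
    D ⊆ G.frontier W D := by
  intro m hmD
  by_contra hmN
  obtain ⟨hDW, ⟨k₀, hk₀⟩, hDc, hKc, h2⟩ := hD.prop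
  set N := G.frontier W D with hN
  have hND : N ⊆ D := fun v hv => hv.1
  set M := G.componentIn (D \ N) m with hM
  have hMsub : M ⊆ D \ N := componentIn_subset ⟨hmD, hmN⟩
  have hmv : ∀ v ∈ N, m ≠ v := fun v hv h => hmN (h ▸ hv)
  have hMC : ∀ v ∈ N, M ⊆ G.componentIn (D \ {v}) m := fun v hv =>
    componentIn_mono (A := D \ N) (B := D \ {v})
      (fun x hx => ⟨hx.1, fun h => hx.2 (h ▸ hv)⟩) m
  have hCsub : ∀ v ∈ N, G.componentIn (D \ {v}) m ⊆ D \ {v} := fun v hv =>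
    componentIn_subset ⟨hmD, hmv v hv⟩
  have hle : ∀ v ∈ N, (G.between (G.componentIn (D \ {v}) m) Wᶜ).ncard ≤ 1 := fun v hv =>
    ncard_between_componentIn_le_one hD hv hmD (hmv v hv)
  have hcut := hG.three_le_cutEdges (Y := M) ⟨m, mem_componentIn_self _ _⟩
    ⟨k₀, fun h => hk₀.2 (hMsub h).1⟩
  rw [cutEdges_eq_between] at hcut
  -- An edge leaving `M` ends outside `W` or in the frontier.
  have htype : ∀ f ∈ G.between M Mᶜ,
      f ∈ G.between M Wᶜ ∨ ∃ v ∈ N, ∃ a ∈ M, G.Link f v a := by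
    rintro f ⟨a, ha, b, hb, hl⟩
    by_cases hbW : b ∈ W
    · right
      have hbD : b ∈ D := by
        by_contra hbD
        exact (hMsub ha).2 ⟨(hMsub ha).1, b, ⟨hbW, hbD⟩, f, hl⟩
      have hbN : b ∈ N := by
        by_contra hbN
        exact hb (componentIn_step ha (hMsub ha) ⟨hbD, hbN⟩ hl)
      exact ⟨b, hbN, a, ha, hl.symm⟩
    · exact Or.inl ⟨a, ha, b, hbW, hl⟩
  -- `Z f z`: the edge `z` from `D` to the complement of `W` lies behind `f` as seen from `M`.
  let Z : E → E → Prop := fun f z => z ∈ G.between D Wᶜ ∧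
    ((f = z ∧ f ∈ G.between M Wᶜ) ∨ ∃ v ∈ N, (∃ a ∈ M, G.Link f v a) ∧
      z ∉ G.between (G.componentIn (D \ {v}) m) Wᶜ)
  have hMD : M ⊆ D := fun x hx => (hMsub hx).1
  have hZex : ∀ f ∈ G.between M Mᶜ, ∃ z, Z f z := by
    intro f hf
    rcases htype f hf with h | ⟨v, hv, a, ha, hl⟩
    · exact ⟨f, between_mono_left hMD h, Or.inl ⟨rfl, h⟩⟩
    · obtain ⟨z, hz, hz'⟩ := Set.exists_mem_notMem_of_ncard_lt_ncard
        ((hle v hv).trans_lt h2) (Set.toFinite _)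
      exact ⟨z, hz, Or.inr ⟨v, hv, ⟨a, ha, hl⟩, hz'⟩⟩
  have hZinj : ∀ f f' z, Z f z → Z f' z → f = f' := by
    rintro f f' z ⟨⟨d, hd, x, hx, hz⟩, h⟩ ⟨-, h'⟩
    rcases h with ⟨rfl, h⟩ | ⟨v, hv, ⟨a, ha, hl⟩, hn⟩
    · rcases h' with ⟨rfl, -⟩ | ⟨v', hv', -, hn'⟩
      · rfl
      · exact absurd (between_mono_left (hMC v' hv') h) hn'
    rcases h' with ⟨rfl, h'⟩ | ⟨v', hv', ⟨a', ha', hl'⟩, hn'⟩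
    · exact absurd (between_mono_left (hMC v hv) h') hn
    have hdn : d ∉ G.componentIn (D \ {v}) m := fun h => hn ⟨d, h, x, hx, hz⟩
    have hdn' : d ∉ G.componentIn (D \ {v'}) m := fun h => hn' ⟨d, h, x, hx, hz⟩
    by_cases hvv : v = v'
    · subst hvv
      by_contra hff
      obtain ⟨hvD, k, hk, g, hg⟩ := hv
      have hinc : ∀ {e y}, G.Link e v y → e = f ∨ e = f' ∨ e = g := by
        intro e y he
        by_contra! hne
        have hfg : f ≠ g := by
          rintro rfl
          rcases hl.eq_or_eq hg with ⟨-, h⟩ | ⟨h, -⟩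
          · exact hk.2 (h ▸ hMD ha)
          · exact hk.2 (h ▸ hvD)
        have hfg' : f' ≠ g := by
          rintro rfl
          rcases hl'.eq_or_eq hg with ⟨-, h⟩ | ⟨h, -⟩
          · exact hk.2 (h ▸ hMD ha')
          · exact hk.2 (h ▸ hvD)
        have hcard := hc.card_le_three_of_incident (v := v) (s := {e, f, f', g}) (by
          simp only [Finset.mem_insert, Finset.mem_singleton]
          rintro _ (rfl | rfl | rfl | rfl)
          exacts [he.incident, hl.incident, hl'.incident, hg.incident])
        rw [Finset.card_insert_of_notMem (by simp [hne]),
          Finset.card_insert_of_notMem (by simp [hff, hfg]),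
          Finset.card_insert_of_notMem (by simp [hfg']), Finset.card_singleton] at hcard
        omega
      have hother : ∀ {e y}, G.Link e v y → y ∈ M ∨ y = k := by
        intro e y he
        have aux : ∀ {b}, G.Link e v b → y = b := by
          intro b hb
          rcases he.eq_or_eq hb with ⟨-, h⟩ | ⟨h, h'⟩
          exacts [h, h'.trans h]
        rcases hinc he with rfl | rfl | rfl
        exacts [Or.inl (aux hl ▸ ha), Or.inl (aux hl' ▸ ha'), Or.inr (aux hg)]
      have hcov : ∀ u, G.Reaches (· ∈ G.inside D) m u →
          u ∈ G.componentIn (D \ {v}) m ∨ u = v := by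
        intro u hu
        induction hu with
        | refl => exact Or.inl (mem_componentIn_self _ _)
        | tail _ hs ih =>
          rename_i b c _
          obtain ⟨e, he, hle⟩ := hs
          have hbc := Link.mem_of_inside hle he
          by_cases hcv : c = v
          · exact Or.inr hcv
          left
          rcases ih with hb | rfl
          · exact componentIn_step hb (hCsub v ⟨hvD, k, hk, g, hg⟩ hb) ⟨hbc.2, hcv⟩ hle
          · rcases hother hle with h | rfl
            · exact hMC b ⟨hvD, k, hk, g, hg⟩ h
            · exact absurd hbc.2 hk.2
      have hdv : d = v := (hcov d (hDc m hmD d hd)).resolve_left hdn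
      subst hdv
      rcases hother hz with h | rfl
      · exact hx (hDW (hMD h))
      · exact hx hk.1
    · have hcov : ∀ u, G.Reaches (· ∈ G.inside D) m u →
          u ∈ G.componentIn (D \ {v}) m ∨ u ∈ G.componentIn (D \ {v'}) m := by
        intro u hu
        induction hu with
        | refl => exact Or.inl (mem_componentIn_self _ _)
        | tail _ hs ih =>
          rename_i b c _
          obtain ⟨e, he, hle⟩ := hs
          have hbc := Link.mem_of_inside hle he
          by_cases hcv : c = v
          · have h := hMC v' hv' ha
            rw [hcv]
            exact Or.inr (componentIn_step h (hCsub v' hv' h) ⟨hND hv, hvv⟩ hl.symm)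
          by_cases hcv' : c = v'
          · have h := hMC v hv ha'
            rw [hcv']
            exact Or.inl (componentIn_step h (hCsub v hv h) ⟨hND hv', Ne.symm hvv⟩ hl'.symm)
          rcases ih with hb | hb
          · exact Or.inl (componentIn_step hb (hCsub v hv hb) ⟨hbc.2, hcv⟩ hle)
          · exact Or.inr (componentIn_step hb (hCsub v' hv' hb) ⟨hbc.2, hcv'⟩ hle)
      rcases hcov d (hDc m hmD d hd) with h | h
      exacts [absurd h hdn, absurd h hdn']
  have hfront : ∀ f f' z' f'' z'', f ≠ f' → f ≠ f'' → f' ≠ f'' → Z f' z' → Z f'' z'' →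
      ¬ ∃ v ∈ N, ∃ a ∈ M, G.Link f v a := by
    rintro f f' z' f'' z'' h1 h2 h3 hz' hz'' ⟨v, hv, hl⟩
    have hz's : z' ∈ G.between (G.componentIn (D \ {v}) m) Wᶜ := by
      by_contra hn
      exact h1 (hZinj f f' z' ⟨hz'.1, Or.inr ⟨v, hv, hl, hn⟩⟩ hz')
    have hz''s : z'' ∈ G.between (G.componentIn (D \ {v}) m) Wᶜ := by
      by_contra hn
      exact h2 (hZinj f f'' z'' ⟨hz''.1, Or.inr ⟨v, hv, hl, hn⟩⟩ hz'')
    have := (Set.ncard_le_one (Set.toFinite _)).1 (hle v hv) _ hz's _ hz''s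
    exact h3 (hZinj f' f'' z' hz' (this ▸ hz''))
  obtain ⟨f₁, f₂, f₃, hf₁, hf₂, hf₃, h12, h13, h23⟩ :=
    (Set.two_lt_ncard_iff (Set.toFinite _)).1 hcut
  obtain ⟨z₁, hz₁⟩ := hZex f₁ hf₁
  obtain ⟨z₂, hz₂⟩ := hZex f₂ hf₂
  obtain ⟨z₃, hz₃⟩ := hZex f₃ hf₃
  have hX₁ := (htype f₁ hf₁).resolve_right
    (hfront f₁ f₂ z₂ f₃ z₃ h12 h13 h23 hz₂ hz₃)
  have hX₂ := (htype f₂ hf₂).resolve_right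
    (hfront f₂ f₁ z₁ f₃ z₃ h12.symm h23 h13 hz₁ hz₃)
  obtain ⟨v, hv, k, hk, e, hl⟩ := hW.exists_link (A := D) (hDW hmD) hmD hk₀.1 hk₀.2
  have hvN : v ∈ N := ⟨hv.2, k, hk, e, hl⟩
  exact h12 ((Set.ncard_le_one (Set.toFinite _)).1 (hle v hvN) _
    (between_mono_left (hMC v hvN) hX₁) _ (between_mono_left (hMC v hvN) hX₂))

/-- Existence of a non-separating ear. -/
theorem exists_ear [Finite V] [Fintype E] (hG : G.EdgeConnected 3) (hc : G.Cubic)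
    (hW : G.InducedConnected W) (hWc : Wᶜ.Nonempty) (hnt : W.Nontrivial) :
    ∃ D, G.EarCandidate W D ∧ D ⊆ G.frontier W D := by
  obtain ⟨D, hD⟩ := Set.Finite.exists_minimal (s := {D | G.EarCandidate W D}) (Set.toFinite _)
    (exists_earCandidate hG hW hWc hnt)
  exact ⟨D, hD.prop, subset_frontier_of_minimal hG hc hW hD⟩

end Ears

section Assembly

/-- `B` is a partial solution on the vertex set `X`: its 2-closure connects `X`, while
`X` is joined to its complement by edges outside `B`. -/
structure IsPartialBase (G : Multigraph V E) (X : Set V) (B : Set E) : Prop where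
  subset_inside : B ⊆ G.inside X
  closed_reaches : ∀ R, B ⊆ R → G.Closed 2 R → ∀ u ∈ X, ∀ v ∈ X, G.Reaches (· ∈ R) u v
  escapes : ∀ x ∈ X, ∃ w ∉ X, G.Reaches (· ∉ B) x w
  compl_connected : G.InducedConnected Xᶜ

theorem IsPartialBase.union_ear [Finite E] {X D : Set V} {B : Set E} (h : G.IsPartialBase X B)
    (hD : G.EarCandidate Xᶜ D) (hfr : D ⊆ G.frontier Xᶜ D) :
    G.IsPartialBase (X ∪ D) (B ∪ G.inside D) := by
  obtain ⟨hDW, -, hDc, hKc, h2⟩ := hD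
  have hcompl : (X ∪ D)ᶜ = Xᶜ \ D := by rw [Set.compl_union]; rfl
  have hout : ∀ y ∉ X, ∃ w ∉ X ∪ D, G.Reaches (· ∉ B ∪ G.inside D) y w := by
    intro y hy
    by_cases hyD : y ∈ D
    · obtain ⟨-, k, hk, e, hl⟩ := hfr hyD
      refine ⟨k, by rw [← Set.mem_compl_iff, hcompl]; exact hk, hl.reaches ?_⟩
      rintro (he | he)
      · exact hy (hl.mem_of_inside (h.subset_inside he)).1
      · exact hk.2 (hl.mem_of_inside he).2
    · exact ⟨y, by simp [hy, hyD], .refl⟩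
  refine ⟨?_, fun R hR hRc => ?_, ?_, by rwa [hcompl]⟩
  · rintro e (he | he)
    · exact inside_mono Set.subset_union_left (h.subset_inside he)
    · exact inside_mono Set.subset_union_right he
  · refine hRc.reaches_union (h.closed_reaches R (Set.subset_union_left.trans hR) hRc)
      (fun u hu v hv => (hDc u hu v hv).mono fun e he => hR (Or.inr he)) ?_
    rwa [compl_compl] at h2
  · rintro x (hx | hx)
    · obtain ⟨w, hw, hr⟩ := h.escapes x hx
      clear hx
      induction hr using Relation.ReflTransGen.head_induction_on with
      | refl => exact hout w hw
      | head hs _ ih =>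
        rename_i a c _
        by_cases ha : a ∈ X
        · obtain ⟨e, he, hl⟩ := hs
          obtain ⟨w', hw', hr'⟩ := ih
          refine ⟨w', hw', (Link.reaches (e := e) hl ?_).trans hr'⟩
          rintro (h' | h')
          · exact he h'
          · exact hDW (Link.mem_of_inside hl h').1 ha
        · exact hout a ha
    · exact hout x (hDW hx)

/-- In a 3-edge-connected cubic graph no single vertex is separating. -/
theorem Cubic.inducedConnected_compl_singleton [Fintype E] (hc : G.Cubic)
    (hG : G.EdgeConnected 3) (x : V) : G.InducedConnected {x}ᶜ := by
  intro u hu v hv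
  by_contra hn
  have hcut : ∀ w ≠ x, ∀ f ∈ G.between (G.componentIn {x}ᶜ w) (G.componentIn {x}ᶜ w)ᶜ,
      ∃ a ∈ G.componentIn {x}ᶜ w, G.Link f x a := by
    rintro w hw f ⟨a, ha, b, hb, hl⟩
    have hbx : b = x := by
      by_contra hbx
      exact hb (componentIn_step ha (componentIn_subset (A := {x}ᶜ) hw ha) hbx hl)
    exact ⟨a, ha, hbx ▸ hl.symm⟩
  have hthree : ∀ w ≠ x, 3 ≤
      (G.between (G.componentIn {x}ᶜ w) (G.componentIn {x}ᶜ w)ᶜ).ncard := by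
    intro w hw
    rw [← cutEdges_eq_between]
    exact hG.three_le_cutEdges ⟨w, mem_componentIn_self _ _⟩
      ⟨x, fun h => componentIn_subset (A := {x}ᶜ) hw h rfl⟩
  obtain ⟨f₁, f₂, f₃, hf₁, hf₂, hf₃, h12, h13, h23⟩ :=
    (Set.two_lt_ncard_iff (Set.toFinite _)).1 (hthree u hu)
  obtain ⟨g, hg⟩ := Set.nonempty_of_ncard_ne_zero
    (s := G.between (G.componentIn {x}ᶜ v) (G.componentIn {x}ᶜ v)ᶜ)
    (by have := hthree v hv; omega)
  obtain ⟨b, hb, hlb⟩ := hcut v hv g hg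
  have hne : ∀ f ∈ G.between (G.componentIn {x}ᶜ u) (G.componentIn {x}ᶜ u)ᶜ, g ≠ f := by
    rintro f hf rfl
    obtain ⟨a, ha, hla⟩ := hcut u hu g hf
    rcases hla.eq_or_eq hlb with ⟨-, rfl⟩ | ⟨h, -⟩
    · exact hn (Reaches.trans ha (Reaches.symm hb))
    · exact componentIn_subset (A := {x}ᶜ) hv hb h.symm
  have hinc : ∀ f ∈ G.between (G.componentIn {x}ᶜ u) (G.componentIn {x}ᶜ u)ᶜ,
      G.src f = x ∨ G.tgt f = x := fun f hf => (hcut u hu f hf).choose_spec.2.incident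
  have hcard := hc.card_le_three_of_incident (v := x) (s := {g, f₁, f₂, f₃}) (by
    simp only [Finset.mem_insert, Finset.mem_singleton]
    rintro _ (rfl | rfl | rfl | rfl)
    exacts [hlb.incident, hinc _ hf₁, hinc _ hf₂, hinc _ hf₃])
  rw [Finset.card_insert_of_notMem (by simp [hne _ hf₁, hne _ hf₂, hne _ hf₃]),
    Finset.card_insert_of_notMem (by simp [h12, h13]),
    Finset.card_insert_of_notMem (by simp [h23]), Finset.card_singleton] at hcard
  omega

theorem Cubic.compl_singleton_nonempty (hc : G.Cubic) (x : V) : ({x}ᶜ : Set V).Nonempty := by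
  by_contra hne
  have hall : ∀ y, y = x := fun y => by
    by_contra hy
    exact hne ⟨y, hy⟩
  have := hc x
  simp only [degree, hall (G.src _), hall (G.tgt _)] at this
  omega

theorem exists_isPartialBase [Fintype E] (hG : G.EdgeConnected 3) (hc : G.Cubic) :
    ∃ X B, X.Nonempty ∧ Xᶜ.Nonempty ∧ G.IsPartialBase X B := by
  have hconn := hG ∅ (by simp)
  obtain ⟨x⟩ := hconn.1
  obtain ⟨w, hw⟩ := hc.compl_singleton_nonempty x
  refine ⟨{x}, ∅, ⟨x, rfl⟩, ⟨w, hw⟩, by simp, ?_, ?_,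
    hc.inducedConnected_compl_singleton hG x⟩
  · rintro R - - u rfl v rfl
    exact .refl
  · exact fun y _ => ⟨w, hw, hconn.2 y w⟩

/-- A partial solution can be enlarged until it misses a single vertex. -/
theorem IsPartialBase.exists_compl_singleton [Finite V] [Fintype E] (hG : G.EdgeConnected 3)
    (hc : G.Cubic) {X : Set V} {B : Set E} (h : G.IsPartialBase X B) (hX : X.Nonempty)
    (hXc : Xᶜ.Nonempty) : ∃ r B', G.IsPartialBase {r}ᶜ B' := by
  induction hn : Xᶜ.ncard using Nat.strong_induction_on generalizing X B with
  | _ n ih =>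
    rcases hXc.exists_eq_singleton_or_nontrivial with ⟨r, hr⟩ | hnt
    · exact ⟨r, B, by rwa [← hr, compl_compl]⟩
    obtain ⟨D, hD, hfr⟩ := exists_ear hG hc h.compl_connected (by rwa [compl_compl]) hnt
    have hcompl : (X ∪ D)ᶜ = Xᶜ \ D := by rw [Set.compl_union]; rfl
    have hDne : D.Nonempty := by
      obtain ⟨e, d, hd, -⟩ := Set.nonempty_of_ncard_ne_zero (s := G.between D Xᶜᶜ)
        (by have := hD.2.2.2.2; omega)
      exact ⟨d, hd⟩
    refine ih _ ?_ (h.union_ear hD hfr) (hX.mono Set.subset_union_left)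
      (by rw [hcompl]; exact hD.2.1) rfl
    rw [← hn, hcompl]
    obtain ⟨d, hd⟩ := hDne
    exact Set.ncard_lt_ncard ⟨Set.sdiff_subset, fun hs => (hs (hD.1 hd)).2 hd⟩ (Set.toFinite _)

end Assembly

end Multigraph

/-- The edge set of every 3-edge-connected cubic graph can be partitioned into a 1-base
and a 2-base; equivalently, it has a peripheral 2-base `B` (then `Bᶜ` is a 1-base). -/
theorem one_base_two_base_decomposition {V E : Type} [Fintype V] [Fintype E]
    (G : Multigraph V E) (hG : G.EdgeConnected 3) (hcubic : G.Cubic) :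
    ∃ B : Set E, G.Peripheral B ∧ G.IsBase 2 B ∧ G.IsBase 1 Bᶜ := by
  obtain ⟨X, B₀, hX, hXc, h₀⟩ := Multigraph.exists_isPartialBase hG hcubic
  obtain ⟨r, B, h⟩ := h₀.exists_compl_singleton hG hcubic hX hXc
  have hto : ∀ u, G.Reaches (· ∉ B) u r := by
    intro u
    by_cases hu : u = r
    · exact hu ▸ .refl
    · obtain ⟨w, hw, hr⟩ := h.escapes u hu
      rwa [show w = r by simpa using hw] at hr
  have hper : ∀ u v, G.Reaches (· ∉ B) u v := fun u v => (hto u).trans (hto v).symm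
  refine ⟨B, ⟨⟨r⟩, hper⟩, Multigraph.isBase_iff.2 fun R hBR hR => ?_,
    Multigraph.isBase_iff.2 fun R hBR hR => ?_⟩
  · have hcut := hG.three_le_cutEdges (Set.singleton_nonempty r)
      (hcubic.compl_singleton_nonempty r)
    rw [Multigraph.cutEdges_eq_between] at hcut
    have hall := hR.reaches_union (D := {r}) (h.closed_reaches R hBR hR)
      (by rintro u rfl v rfl; exact .refl) (by omega)
    rw [Set.compl_union_self] at hall
    exact hR.eq_univ two_pos fun u v => hall u trivial v trivial
  · exact hR.eq_univ one_pos fun u v => (hper u v).mono fun e he => hBR he
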